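/- Let Q ∈ ℝ^{p×k} and R ∈ ℝ^{p×(p−k)} satisfy RᵀQ = 0 and [Q R] invertible, and let A ∈ ℝ^{p×p} be symmetric positive definite. Then for every z ∈ ℝ^p, zᵀR(RᵀAR)⁻¹Rᵀz ≤ λ_max(A⁻¹)‖z‖₂²; equivalently, λ_max(R(RᵀAR)⁻¹Rᵀ) ≤ λ_max(A⁻¹). -/

import Mathlib

open Matrix

noncomputable section

/-- The square block matrix `[Q R]` obtained by concatenating the columns of
`Q ∈ ℝ^{p×k}` and `R ∈ ℝ^{p×(p-k)}`. -/
def blockQR {p k : ℕ} (Q : Matrix (Fin p) (Fin k) ℝ) (R : Matrix (Fin p) (Fin (p - k)) ℝ) :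
    Matrix (Fin p) (Fin p) ℝ :=
  Matrix.of fun i j =>
    if h : (j : ℕ) < k then Q i ⟨j, h⟩
    else R i ⟨(j : ℕ) - k, by have := j.isLt; omega⟩

section SchurComplement

variable {K m n : Type*} [Fintype m] [DecidableEq m]

-- The block matrix is the congruence `Cᴴ A⁻¹ C` of `A⁻¹` by `C = [AR I]`.
lemma posSemidef_fromBlocks_compression_inv [CommRing K] [PartialOrder K] [StarRing K] [Finite n]
    {A : Matrix m m K} (hA : A.PosSemidef) (hA_unit : IsUnit A.det) (R : Matrix m n K) :
    (fromBlocks (Rᴴ * A * R) Rᴴ R A⁻¹).PosSemidef := by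
  have h_congr : (fromCols (A * R) 1)ᴴ * A⁻¹ * fromCols (A * R) 1 =
      fromBlocks (Rᴴ * A * R) Rᴴ R A⁻¹ := by
    rw [conjTranspose_fromCols_eq_fromRows_conjTranspose, fromRows_mul, fromRows_mul_fromCols,
      conjTranspose_mul, hA.isHermitian.eq, conjTranspose_one, Matrix.one_mul, Matrix.mul_one,
      Matrix.mul_one, mul_nonsing_inv_cancel_right _ _ hA_unit,
      nonsing_inv_mul_cancel_left _ _ hA_unit, Matrix.mul_assoc]
  exact h_congr ▸ hA.inv.conjTranspose_mul_mul_same _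

variable [Field K] [PartialOrder K] [StarRing K] [StarOrderedRing K] [Fintype n] [DecidableEq n]

theorem posSemidef_inv_sub_mul_inv_compression_mul {A : Matrix m m K} (hA : A.PosDef)
    {R : Matrix m n K} (hR : Function.Injective R.mulVec) :
    (A⁻¹ - R * (Rᴴ * A * R)⁻¹ * Rᴴ).PosSemidef := by
  have h_compression : (Rᴴ * A * R).PosDef := hA.conjTranspose_mul_mul_same hR
  have h_block : (fromBlocks (Rᴴ * A * R) Rᴴ Rᴴᴴ A⁻¹).PosSemidef := by
    rw [conjTranspose_conjTranspose]
    exact posSemidef_fromBlocks_compression_inv hA.posSemidef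
      ((isUnit_iff_isUnit_det A).1 hA.isUnit) R
  have : Invertible (Rᴴ * A * R) := h_compression.isUnit.invertible
  simpa only [conjTranspose_conjTranspose] using (h_compression.fromBlocks₁₁ Rᴴ A⁻¹).1 h_block

theorem statement_7_general {A : Matrix m m K} (hA : A.PosDef)
    {R : Matrix m n K} (hR : Function.Injective R.mulVec)
    {c : K} (hc : ∀ z : m → K, star z ⬝ᵥ (A⁻¹ *ᵥ z) ≤ c * (star z ⬝ᵥ z)) (z : m → K) :
    star z ⬝ᵥ ((R * (Rᴴ * A * R)⁻¹ * Rᴴ) *ᵥ z) ≤ c * (star z ⬝ᵥ z) := by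
  refine le_trans ?_ (hc z)
  have h_nonneg := (posSemidef_inv_sub_mul_inv_compression_mul hA hR).dotProduct_mulVec_nonneg z
  rwa [sub_mulVec, dotProduct_sub, sub_nonneg] at h_nonneg

end SchurComplement

lemma mulVec_injective_of_isUnit_det_blockQR {p k : ℕ} {Q : Matrix (Fin p) (Fin k) ℝ}
    {R : Matrix (Fin p) (Fin (p - k)) ℝ} (hQR : IsUnit (blockQR Q R).det) :
    Function.Injective R.mulVec := by
  let rightIndex (j : Fin (p - k)) : Fin p := ⟨k + j, by omega⟩
  have rightIndex_injective : Function.Injective rightIndex := fun i j hij => by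
    simpa [rightIndex, Fin.ext_iff] using hij
  have col_R : R.col = (blockQR Q R).col ∘ rightIndex := by
    ext j i
    simp [blockQR, rightIndex]
  rw [mulVec_injective_iff, col_R]
  exact (linearIndependent_cols_of_det_ne_zero hQR.ne_zero).comp _ rightIndex_injective

/-- Lemma S2, eq. (S-716-det): if `RᵀQ = 0`, `[Q R]` is invertible and `A` is
symmetric positive definite, then `zᵀR(RᵀAR)⁻¹Rᵀz ≤ λ_max(A⁻¹)‖z‖₂²` for every `z`, i.e.
`λ_max(R(RᵀAR)⁻¹Rᵀ) ≤ λ_max(A⁻¹)`. The largest eigenvalue of the symmetric matrix `A⁻¹` is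
characterized through its quadratic form: `c ≥ λ_max(A⁻¹)` iff `zᵀA⁻¹z ≤ c‖z‖²` for all `z`
(taking `c = λ_max(A⁻¹)` recovers the literal statement). -/
theorem statement_7 {p k : ℕ} (hk : k < p)
    (Q : Matrix (Fin p) (Fin k) ℝ) (R : Matrix (Fin p) (Fin (p - k)) ℝ)
    (hRQ : Rᵀ * Q = 0) (hQR : IsUnit (blockQR Q R).det)
    (A : Matrix (Fin p) (Fin p) ℝ) (hA : A.PosDef)
    (c : ℝ) (hc : ∀ z : Fin p → ℝ, z ⬝ᵥ (A⁻¹ *ᵥ z) ≤ c * (z ⬝ᵥ z)) :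
    ∀ z : Fin p → ℝ, z ⬝ᵥ ((R * (Rᵀ * A * R)⁻¹ * Rᵀ) *ᵥ z) ≤ c * (z ⬝ᵥ z) := by
  have hR := mulVec_injective_of_isUnit_det_blockQR hQR
  simpa using statement_7_general hA hR (by simpa using hc)
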